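/- Let n ≥ 3 and 2 ≤ i ≤ n−1. Then the word Ω_n s_{n−3} s_{n−4} ⋯ s_{i−1} (the word Ω_n followed by the letters s_j with j decreasing from n−3 to i−1; this tail is empty when i = n−1) is a reduced expression of the permutation v_{n,i}; in particular, ℓ(v_{n,i}) = 3n − i − 5. -/

import Mathlib

/-!
The product of the word is computed by induction: appending the block `s_{m+2} s_{m+1}` to `Ω_{m+2}`
turns `3 4 ⋯ (m+2) 1 2` into `3 4 ⋯ (m+3) 1 2`, and each letter of the tail moves the entry `n` one
position to the left (`wprod_Omega`, `wprod_Omega_tail`).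

Reducedness follows by counting inversions.  Left multiplication by a simple transposition creates
at most one new inversion, so a word of length `k` has at most `k` inversions
(`exists_inversions_finset`).  The permutation `v_{n,i}` has at least `3n - i - 5` of them: each of
the `n - 2` first entries exceeds the last two entries `1, 2`, and the entry `n` in position `i - 1`
exceeds the entries in positions `i, …, n - 2`.  This is exactly the number of letters.
-/

/-- The simple transposition `s i = (i, i+1)` acting on `ℕ` (1-based positions);
multiplying a permutation on the right by `st i` swaps the entries in positions
`i` and `i+1` of its one-line notation. -/
def st (i : ℕ) : Equiv.Perm ℕ := Equiv.swap i (i + 1)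

/-- The permutation represented by a word, i.e. a list `[i₁, …, i_k]` of indices,
namely the product `s_{i₁} s_{i₂} ⋯ s_{i_k}`. -/
def wprod (l : List ℕ) : Equiv.Perm ℕ := (l.map st).prod

/-- `σ` belongs to the symmetric group `S_n` on `{1, …, n}`:
it fixes `0` and every `m > n`. -/
def MemS (n : ℕ) (σ : Equiv.Perm ℕ) : Prop := ∀ m : ℕ, m < 1 ∨ n < m → σ m = m

/-- The Coxeter length `ℓ(σ)`: the minimal number of simple transpositions
`s_i` (`i ≥ 1`) in an expression of `σ` as their product. -/
noncomputable def len (σ : Equiv.Perm ℕ) : ℕ :=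
  sInf {k : ℕ | ∃ l : List ℕ, (∀ i ∈ l, 1 ≤ i) ∧ l.length = k ∧ wprod l = σ}

/-- `l` is a reduced word: a word in the `s_i` (`i ≥ 1`) whose number of letters
equals the length of the permutation it represents. -/
def Reduced (l : List ℕ) : Prop := (∀ i ∈ l, 1 ≤ i) ∧ l.length = len (wprod l)

/-- Bruhat order, characterized by the subword property: `u ≤ v` iff some
(equivalently, every) reduced expression of `v` has a subword (sublist) that is a
reduced expression of `u`. -/
def BruhatLE (u v : Equiv.Perm ℕ) : Prop :=
  ∃ l : List ℕ, Reduced l ∧ wprod l = v ∧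
    ∃ l' : List ℕ, l'.Sublist l ∧ Reduced l' ∧ wprod l' = u

/-- `s_i ∈ D_R(σ)`, i.e. `σ(i) > σ(i+1)`. -/
def DR (σ : Equiv.Perm ℕ) (i : ℕ) : Prop := σ (i + 1) < σ i

/-- The word `Ω_n = s_2 s_1 s_3 s_2 s_4 s_3 ⋯ s_{n-1} s_{n-2}`,
the concatenation of the blocks `s_j s_{j-1}` for `j = 2, …, n-1`. -/
def Omega (n : ℕ) : List ℕ := (List.range (n - 2)).flatMap fun j => [j + 2, j + 1]

/-- `d(ω)`: the number of indices `1 ≤ t < k` with `i_t - i_{t+1} = 1`,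
for a word `ω = s_{i₁} ⋯ s_{i_k}`. -/
def dstat (l : List ℕ) : ℕ := (l.zip l.tail).countP fun p => p.1 == p.2 + 1

/-- `v` is the permutation of `S_n` with one-line notation `3 4 ⋯ n 1 2`. -/
def IsVn (n : ℕ) (v : Equiv.Perm ℕ) : Prop :=
  (∀ i : ℕ, 1 ≤ i → i ≤ n - 2 → v i = i + 2) ∧ v (n - 1) = 1 ∧ v n = 2 ∧
    ∀ m : ℕ, m < 1 ∨ n < m → v m = m

/-- `v` is the permutation `v_{n,i}` of `S_n`, with one-line notation
`n 3 4 ⋯ (n-1) 1 2` if `i = 2`, and `3 4 ⋯ i n (i+1) ⋯ (n-1) 1 2` if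
`3 ≤ i ≤ n-1`. -/
def IsVni (n i : ℕ) (v : Equiv.Perm ℕ) : Prop :=
  (∀ j : ℕ, 1 ≤ j → j ≤ i - 2 → v j = j + 2) ∧ v (i - 1) = n ∧
    (∀ j : ℕ, i ≤ j → j ≤ n - 2 → v j = j + 1) ∧ v (n - 1) = 1 ∧ v n = 2 ∧
    ∀ m : ℕ, m < 1 ∨ n < m → v m = m

/-- The word `s_{n-3} s_{n-4} ⋯ s_{i-1}` (letters with indices decreasing from
`n-3` down to `i-1`; empty when `i = n-1`). -/
def OmegaTail (n i : ℕ) : List ℕ := (List.range (n - 1 - i)).map fun t => n - 3 - t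

theorem wprod_append (l l' : List ℕ) : wprod (l ++ l') = wprod l * wprod l' := by
  simp [wprod]

theorem wprod_cons (a : ℕ) (l : List ℕ) : wprod (a :: l) = st a * wprod l := by
  simp [wprod]

theorem st_apply (i x : ℕ) :
    st i x = if x = i then i + 1 else if x = i + 1 then i else x := by
  simp [st, Equiv.swap_apply_def]

theorem Omega_succ (m : ℕ) : Omega (m + 3) = Omega (m + 2) ++ [m + 2, m + 1] := by
  simp [Omega, List.range_succ]

theorem length_Omega (m : ℕ) : (Omega (m + 2)).length = 2 * m := by
  induction m with
  | zero => simp [Omega]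
  | succ m ih => rw [Omega_succ, List.length_append, ih]; simp; omega

/-- The one-line notation of the product of `Ω_{m+2}` is `3 4 ⋯ (m+2) 1 2`. -/
theorem wprod_Omega (m x : ℕ) :
    wprod (Omega (m + 2)) x =
      if x = 0 then 0 else if x ≤ m then x + 2 else if x = m + 1 then 1
      else if x = m + 2 then 2 else x := by
  induction m generalizing x with
  | zero => simp [Omega, wprod]; split_ifs <;> omega
  | succ m ih =>
    have h : wprod (Omega (m + 3)) x = wprod (Omega (m + 2)) (st (m + 2) (st (m + 1) x)) := by
      rw [Omega_succ, wprod_append]; simp [wprod]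
    rw [h, ih, st_apply, st_apply]
    split_ifs <;> omega

/-- After the first `k` letters of the tail, the entry `m + 2` of `3 4 ⋯ (m+2) 1 2` has moved `k`
positions to the left, to position `m - k`. -/
theorem wprod_Omega_tail (m k : ℕ) (hk : k < m) (x : ℕ) :
    wprod (Omega (m + 2) ++ (List.range k).map fun t => m + 2 - 3 - t) x =
      if x = 0 then 0 else if x < m - k then x + 2 else if x = m - k then m + 2
      else if x ≤ m then x + 1 else if x = m + 1 then 1
      else if x = m + 2 then 2 else x := by
  induction k generalizing x with
  | zero => simp [wprod_Omega]; split_ifs <;> omega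
  | succ k ih =>
    rw [List.range_succ, List.map_append, ← List.append_assoc, wprod_append, Equiv.Perm.mul_apply]
    have h : wprod (List.map (fun t => m + 2 - 3 - t) [k]) x = st (m - (k + 1)) x := by
      rw [show m - (k + 1) = m + 2 - 3 - k by omega]
      simp [wprod]
    rw [h, ih (by omega), st_apply]
    split_ifs <;> omega

/-- The inversions of the product of a word of length `k` form a set of at most `k` pairs: the only
inversion created by multiplying `σ` by `s_i` on the left is the pair of positions of the values
`i` and `i + 1`. -/
theorem exists_inversions_finset (l : List ℕ) :
    ∃ F : Finset (ℕ × ℕ), F.card ≤ l.length ∧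
      ∀ a b, a < b → wprod l b < wprod l a → (a, b) ∈ F := by
  induction l with
  | nil => exact ⟨∅, by simp, fun a b h h' => by simp [wprod] at h'; omega⟩
  | cons i l ih =>
    obtain ⟨F, hF, h⟩ := ih
    refine ⟨insert ((wprod l).symm i, (wprod l).symm (i + 1)) F, ?_, fun a b hab hlt => ?_⟩
    · exact (Finset.card_insert_le _ _).trans (by simpa using hF)
    · rw [wprod_cons, Equiv.Perm.mul_apply, Equiv.Perm.mul_apply, st_apply, st_apply] at hlt
      have hne : wprod l a ≠ wprod l b := fun e => hab.ne ((wprod l).injective e)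
      by_cases hlt' : wprod l b < wprod l a
      · exact Finset.mem_insert_of_mem (h a b hab hlt')
      · have hval : wprod l a = i ∧ wprod l b = i + 1 := by
          split_ifs at hlt <;> omega
        rw [← hval.2, ← hval.1]
        simp

theorem card_le_len {σ : Equiv.Perm ℕ} {l : List ℕ} (hl : ∀ i ∈ l, 1 ≤ i) (hσ : wprod l = σ)
    (G : Finset (ℕ × ℕ)) (hG : ∀ p ∈ G, p.1 < p.2 ∧ σ p.2 < σ p.1) : G.card ≤ len σ := by
  refine le_csInf ⟨_, l, hl, rfl, hσ⟩ ?_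
  rintro k ⟨w, -, rfl, hw⟩
  obtain ⟨F, hF, h⟩ := exists_inversions_finset w
  refine (Finset.card_le_card fun p hp => ?_).trans hF
  exact h p.1 p.2 (hG p hp).1 (by rw [hw]; exact (hG p hp).2)

theorem len_le_length {l : List ℕ} (hl : ∀ i ∈ l, 1 ≤ i) : len (wprod l) ≤ l.length :=
  Nat.sInf_le ⟨l, hl, rfl, rfl⟩

/-- For `n ≥ 3` and `2 ≤ i ≤ n-1`, the word `Ω_n s_{n-3} s_{n-4} ⋯ s_{i-1}` is a
reduced expression of `v_{n,i}`; in particular `ℓ(v_{n,i}) = 3n - i - 5`. -/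
theorem omega_tail_reduced_expression_of_vni (n i : ℕ) (hn : 3 ≤ n)
    (hi2 : 2 ≤ i) (hin : i ≤ n - 1) :
    IsVni n i (wprod (Omega n ++ OmegaTail n i)) ∧
      Reduced (Omega n ++ OmegaTail n i) ∧
      len (wprod (Omega n ++ OmegaTail n i)) = 3 * n - i - 5 := by
  obtain ⟨m, rfl⟩ : ∃ m, n = m + 2 := ⟨n - 2, by omega⟩
  have hw : ∀ x, wprod (Omega (m + 2) ++ OmegaTail (m + 2) i) x =
      if x = 0 then 0 else if x < i - 1 then x + 2 else if x = i - 1 then m + 2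
      else if x ≤ m then x + 1 else if x = m + 1 then 1
      else if x = m + 2 then 2 else x := by
    intro x
    have h := wprod_Omega_tail m (m + 2 - 1 - i) (by omega) x
    rw [show m - (m + 2 - 1 - i) = i - 1 by omega] at h
    exact h
  have hpos : ∀ j ∈ Omega (m + 2) ++ OmegaTail (m + 2) i, 1 ≤ j := by
    intro j hj
    simp only [Omega, OmegaTail, List.mem_append, List.mem_flatMap, List.mem_map, List.mem_range,
      List.mem_cons, List.not_mem_nil, or_false] at hj
    rcases hj with ⟨a, -, h⟩ | ⟨a, ha, h⟩ <;> omega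
  have hlen : (Omega (m + 2) ++ OmegaTail (m + 2) i).length = 3 * (m + 2) - i - 5 := by
    rw [List.length_append, length_Omega]
    simp only [OmegaTail, List.length_map, List.length_range]
    omega
  have hge : 3 * (m + 2) - i - 5 ≤ len (wprod (Omega (m + 2) ++ OmegaTail (m + 2) i)) := by
    -- `A`: the first `m` entries against the final `1, 2`; `B`: the entry `m + 2` against the
    -- entries between it and the final `1, 2`.
    let A : Finset (ℕ × ℕ) := Finset.Icc 1 m ×ˢ Finset.Icc (m + 1) (m + 2)
    let B : Finset (ℕ × ℕ) := {i - 1} ×ˢ Finset.Icc i m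
    have hdisj : Disjoint A B := by
      rw [Finset.disjoint_left]
      rintro ⟨a, b⟩ hA hB
      simp only [A, B, Finset.mem_product, Finset.mem_Icc, Finset.mem_singleton] at hA hB
      omega
    have hcard : (A ∪ B).card = 3 * (m + 2) - i - 5 := by
      rw [Finset.card_union_of_disjoint hdisj]
      simp only [A, B, Finset.card_product, Nat.card_Icc, Finset.card_singleton]
      rw [show m + 2 + 1 - (m + 1) = 2 by omega]
      omega
    rw [← hcard]
    refine card_le_len hpos rfl _ ?_
    rintro ⟨a, b⟩ hp
    simp only [A, B, Finset.mem_union, Finset.mem_product, Finset.mem_Icc,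
      Finset.mem_singleton] at hp
    simp only [hw]
    refine ⟨by omega, ?_⟩
    split_ifs <;> omega
  have hle := len_le_length hpos
  refine ⟨⟨?_, ?_, ?_, ?_, ?_, ?_⟩, ⟨hpos, by omega⟩, by omega⟩
  · intro j h1 h2; rw [hw]; split_ifs <;> omega
  · rw [hw]; split_ifs <;> omega
  · intro j h1 h2; rw [hw]; split_ifs <;> omega
  · rw [hw]; split_ifs <;> omega
  · rw [hw]; split_ifs <;> omega
  · intro j h1; rw [hw]; split_ifs <;> omega
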